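/- arXiv:1706.00980 — 2 statements merged into one kernel-verified Lean document; each statement's English description precedes it below -/
import Mathlib

section
/- Let β > 0 and let λ₁, λ₂ ∈ [−1, 1] be such that λ₁ + λ₂ ∈ [−1, 1]. Then for every real x one has β·(λ₁ ∘ x)·(λ₂ ∘ x) ≠ 1 and (λ₁ ∘ x) ⊕ (λ₂ ∘ x) = (λ₁ + λ₂) ∘ x. -/
/-- Generalized addition `x ⊕ y = (x + y)/(1 - β x y)`. -/
noncomputable def oplus (β x y : ℝ) : ℝ := (x + y) / (1 - β * x * y)

/-- Generalized multiplication by a scalar `λ ∘ x = (1/√β) tan (λ arctan (√β x))`. -/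
noncomputable def circ (β l x : ℝ) : ℝ :=
  (1 / Real.sqrt β) * Real.tan (l * Real.arctan (Real.sqrt β * x))

/-!
The tangent turns addition of angles into `⊕` at `β = 1`, and rescaling by `1 / √β` turns this into
`⊕` at `β`. Wherever the two tangents are finite, the denominator of their `⊕`-sum vanishes exactly
when the cosine of the total angle does; a scalar in `[-1, 1]` keeps the angle `arctan (√β x)`
inside `(-π/2, π/2)`, where the cosine is positive.
-/

open Real

theorem cos_mul_pos_of_abs_le_one {l θ : ℝ} (hl : |l| ≤ 1) (hθ : |θ| < π / 2) :
    0 < cos (l * θ) := by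
  have hlθ : |l * θ| < π / 2 := calc
    |l * θ| = |l| * |θ| := abs_mul l θ
    _ ≤ |θ| := mul_le_of_le_one_left (abs_nonneg θ) hl
    _ < π / 2 := hθ
  exact cos_pos_of_mem_Ioo (abs_lt.mp hlθ)

theorem tan_mul_tan_eq_one_iff {a b : ℝ} (ha : cos a ≠ 0) (hb : cos b ≠ 0) :
    tan a * tan b = 1 ↔ cos (a + b) = 0 := by
  rw [tan_eq_sin_div_cos, tan_eq_sin_div_cos, div_mul_div_comm,
    div_eq_one_iff_eq (mul_ne_zero ha hb), cos_add, sub_eq_zero, eq_comm]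

theorem tan_add_eq_oplus_one {a b : ℝ} (ha : cos a ≠ 0) (hb : cos b ≠ 0) :
    tan (a + b) = oplus 1 (tan a) (tan b) := by
  rw [oplus, one_mul, tan_add' ⟨cos_ne_zero_iff.mp ha, cos_ne_zero_iff.mp hb⟩]

theorem oplus_mul_mul (β c u v : ℝ) :
    oplus β (c * u) (c * v) = c * oplus (β * c ^ 2) u v := by
  unfold oplus
  ring

theorem mul_one_div_sqrt_sq {β : ℝ} (hβ : 0 < β) : β * (1 / √β) ^ 2 = 1 := by
  rw [div_pow, one_pow, sq_sqrt hβ.le, mul_one_div_cancel hβ.ne']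

theorem mul_circ_mul_circ {β : ℝ} (hβ : 0 < β) (l₁ l₂ x : ℝ) :
    β * circ β l₁ x * circ β l₂ x =
      tan (l₁ * arctan (√β * x)) * tan (l₂ * arctan (√β * x)) := by
  unfold circ
  linear_combination
    tan (l₁ * arctan (√β * x)) * tan (l₂ * arctan (√β * x)) * mul_one_div_sqrt_sq hβ

theorem oplus_circ_circ {β l₁ l₂ x : ℝ} (hβ : 0 < β)
    (h₁ : cos (l₁ * arctan (√β * x)) ≠ 0) (h₂ : cos (l₂ * arctan (√β * x)) ≠ 0) :
    oplus β (circ β l₁ x) (circ β l₂ x) = circ β (l₁ + l₂) x := by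
  unfold circ
  rw [oplus_mul_mul, mul_one_div_sqrt_sq hβ, ← tan_add_eq_oplus_one h₁ h₂, add_mul]

theorem circ_add_scalars_general {β l₁ l₂ x : ℝ} (hβ : 0 < β)
    (h₁ : cos (l₁ * arctan (√β * x)) ≠ 0) (h₂ : cos (l₂ * arctan (√β * x)) ≠ 0)
    (h : cos ((l₁ + l₂) * arctan (√β * x)) ≠ 0) :
    β * circ β l₁ x * circ β l₂ x ≠ 1 ∧
    oplus β (circ β l₁ x) (circ β l₂ x) = circ β (l₁ + l₂) x := by
  refine ⟨?_, oplus_circ_circ hβ h₁ h₂⟩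
  rwa [mul_circ_mul_circ hβ, Ne, tan_mul_tan_eq_one_iff h₁ h₂, ← add_mul]

theorem circ_add_scalars (β l₁ l₂ : ℝ) (hβ : 0 < β)
    (hl₁ : l₁ ∈ Set.Icc (-1 : ℝ) 1) (hl₂ : l₂ ∈ Set.Icc (-1 : ℝ) 1)
    (hl : l₁ + l₂ ∈ Set.Icc (-1 : ℝ) 1) (x : ℝ) :
    β * circ β l₁ x * circ β l₂ x ≠ 1 ∧
    oplus β (circ β l₁ x) (circ β l₂ x) = circ β (l₁ + l₂) x := by
  have hcos {l : ℝ} (h : l ∈ Set.Icc (-1 : ℝ) 1) : cos (l * arctan (√β * x)) ≠ 0 :=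
    (cos_mul_pos_of_abs_le_one (abs_le.mpr h) (abs_lt.mpr (arctan_mem_Ioo _))).ne'
  exact circ_add_scalars_general hβ (hcos hl₁) (hcos hl₂) (hcos hl)
end

section
/- Let β > 0, ħ > 0, ξ ∈ ℝ. Define the position eigenfunction in momentum representation ψ_ξ(p) = √(√β/π)·e^{−(i/ħ)·ξ·arctan(√β p)/√β}. Then for every q ∈ ℝ and every p ∈ ℝ with βp² ≤ 1, the λ = 1/2 Wigner function of ψ_ξ equals the position eigenvector distribution: W_{1/2}(ψ_ξ, ψ_ξ)(q, p) = sinc((q − ξ)/(2ħ√β)). -/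
open MeasureTheory

/-- Generalized subtraction `x ⊖ y = x ⊕ (-y)`. -/
noncomputable def ominus (β x y : ℝ) : ℝ := oplus β x (-y)

/-- The measure `dμ(p) = dp / (1 + β p²)` on ℝ. -/
noncomputable def gmeasure (β : ℝ) : Measure ℝ :=
  volume.withDensity (fun p => ENNReal.ofReal (1 / (1 + β * p ^ 2)))

/-- The generalized λ-Wigner transform. -/
noncomputable def Wig (β hb l : ℝ) (φ ψ : ℝ → ℂ) (q p : ℝ) : ℂ :=
  ∫ p', (starRingEnd ℂ) (φ (ominus β p (circ β (1 - l) p')))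
      * ψ (oplus β p (circ β l p'))
      * Complex.exp (Complex.I / hb * q *
          (Real.arctan (Real.sqrt β * p') / Real.sqrt β)) ∂(gmeasure β)

/-- The normalized cardinal sine: `sinc x = sin (π x) / (π x)` for `x ≠ 0`, `sinc 0 = 1`. -/
noncomputable def sinc (x : ℝ) : ℝ :=
  if x = 0 then 1 else Real.sin (Real.pi * x) / (Real.pi * x)

/-- The position eigenfunction in momentum representation. -/
noncomputable def psiPos (β hb ξ : ℝ) (p : ℝ) : ℂ :=
  (Real.sqrt (Real.sqrt β / Real.pi) : ℝ)
    * Complex.exp (-(Complex.I / hb) * ξ *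
        (Real.arctan (Real.sqrt β * p) / Real.sqrt β))

/-!
In the coordinate `θ = arctan (√β p)` the operation `⊕` is addition modulo `π`, `λ ∘ ·` is
multiplication by `λ`, and `μ` is Lebesgue measure on `(-π/2, π/2)` up to the factor `1/√β`. As
`ψ_ξ` is a character of `θ`, the product of its two shifted copies depends on `p` only through a
possible wrap-around modulo `π`, which the bound on `p` excludes. What is left is the Fourier
integral of the indicator function of `(-π/2, π/2)`.
-/

open scoped Real ComplexConjugate

theorem sqrt_mul_oplus {β : ℝ} (hβ : 0 ≤ β) (x y : ℝ) :
    √β * oplus β x y = Real.tan (Real.arctan (√β * x) + Real.arctan (√β * y)) := by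
  have hsq : √β * x * (√β * y) = β * x * y := by
    rw [mul_mul_mul_comm, Real.mul_self_sqrt hβ, mul_assoc]
  rw [Real.tan_add' ⟨Real.arctan_ne_mul_pi_div_two, Real.arctan_ne_mul_pi_div_two⟩,
    Real.tan_arctan, Real.tan_arctan, hsq, oplus, ← mul_add, mul_div_assoc]

theorem sqrt_mul_circ {β : ℝ} (hβ : 0 < β) (l x : ℝ) :
    √β * circ β l x = Real.tan (l * Real.arctan (√β * x)) := by
  rw [circ, ← mul_assoc, mul_one_div_cancel (Real.sqrt_pos.2 hβ).ne', one_mul]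

theorem circ_neg (β l x : ℝ) : circ β (-l) x = -circ β l x := by
  simp [circ]

theorem abs_add_mul_arctan_lt_pi_div_two {a l : ℝ} (ha : |a| < π / 2)
    (hl : |a| ≤ (1 - |l|) * (π / 2)) (x : ℝ) : |a + l * Real.arctan x| < π / 2 := by
  have hx : |Real.arctan x| < π / 2 := abs_lt.2 (Real.arctan_mem_Ioo x)
  rcases eq_or_ne l 0 with rfl | hl₀
  · simpa using ha
  · calc |a + l * Real.arctan x| ≤ |a| + |l| * |Real.arctan x| := by
          simpa only [abs_mul] using abs_add_le a (l * Real.arctan x)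
      _ < |a| + |l| * (π / 2) := by gcongr
      _ ≤ π / 2 := by linarith

theorem arctan_sqrt_mul_circ {β l : ℝ} (hβ : 0 < β) (hl : |l| ≤ 1) (x : ℝ) :
    Real.arctan (√β * circ β l x) = l * Real.arctan (√β * x) := by
  have hle : |(0 : ℝ)| ≤ (1 - |l|) * (π / 2) := by
    rw [abs_zero]
    exact mul_nonneg (sub_nonneg.2 hl) Real.pi_div_two_pos.le
  have hlt : |l * Real.arctan (√β * x)| < π / 2 := by
    simpa only [zero_add] using
      abs_add_mul_arctan_lt_pi_div_two (by simp [Real.pi_pos]) hle (√β * x)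
  rw [sqrt_mul_circ hβ, Real.arctan_tan (abs_lt.1 hlt).1 (abs_lt.1 hlt).2]

theorem arctan_sqrt_mul_oplus_circ {β l p : ℝ} (hβ : 0 < β)
    (hp : |Real.arctan (√β * p)| ≤ (1 - |l|) * (π / 2)) (p' : ℝ) :
    Real.arctan (√β * oplus β p (circ β l p'))
      = Real.arctan (√β * p) + l * Real.arctan (√β * p') := by
  have hl : |l| ≤ 1 :=
    sub_nonneg.1 (nonneg_of_mul_nonneg_left ((abs_nonneg _).trans hp) Real.pi_div_two_pos)
  have hlt : |Real.arctan (√β * p) + l * Real.arctan (√β * p')| < π / 2 :=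
    abs_add_mul_arctan_lt_pi_div_two (abs_lt.2 (Real.arctan_mem_Ioo _)) hp (√β * p')
  rw [sqrt_mul_oplus hβ.le, arctan_sqrt_mul_circ hβ hl,
    Real.arctan_tan (abs_lt.1 hlt).1 (abs_lt.1 hlt).2]

theorem abs_arctan_le_pi_div_four_iff {x : ℝ} : |Real.arctan x| ≤ π / 4 ↔ |x| ≤ 1 := by
  rw [abs_le, abs_le, ← Real.arctan_one, ← Real.arctan_neg, Real.arctan_le_arctan_iff,
    Real.arctan_le_arctan_iff]

theorem abs_arctan_sqrt_mul_le_pi_div_four_iff {β : ℝ} (hβ : 0 ≤ β) {x : ℝ} :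
    |Real.arctan (√β * x)| ≤ π / 4 ↔ β * x ^ 2 ≤ 1 := by
  rw [abs_arctan_le_pi_div_four_iff, ← sq_le_one_iff_abs_le_one, mul_pow, Real.sq_sqrt hβ]

section Integration

variable {E : Type*} [NormedAddCommGroup E] [NormedSpace ℝ E] {β : ℝ}

theorem image_arctan_const_mul {c : ℝ} (hc : c ≠ 0) :
    (fun x => Real.arctan (c * x)) '' Set.univ = Set.Ioo (-(π / 2)) (π / 2) := by
  rw [Set.image_univ, ← Real.range_arctan]
  exact (mul_left_surjective₀ hc).range_comp Real.arctan

theorem integral_gmeasure (hβ : 0 ≤ β) (f : ℝ → E) :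
    ∫ p, f p ∂gmeasure β = ∫ p, (1 / (1 + β * p ^ 2)) • f p := by
  have hpos (p : ℝ) : 0 ≤ 1 / (1 + β * p ^ 2) := by positivity
  rw [gmeasure, integral_withDensity_eq_integral_toReal_smul (by fun_prop)
    (.of_forall fun _ => ENNReal.ofReal_lt_top)]
  simp only [ENNReal.toReal_ofReal (hpos _)]

theorem integral_comp_arctan_gmeasure (hβ : 0 < β) (g : ℝ → E) :
    ∫ p, g (Real.arctan (√β * p)) ∂gmeasure β
      = (√β)⁻¹ • ∫ θ in (-(π / 2))..(π / 2), g θ := by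
  have hs : 0 < √β := Real.sqrt_pos.2 hβ
  have hderiv (p : ℝ) : HasDerivAt (fun p => Real.arctan (√β * p))
      (√β * (1 / (1 + β * p ^ 2))) p := by
    refine ((hasDerivAt_id p).const_mul (√β)).arctan.congr_deriv ?_
    rw [id, mul_pow, Real.sq_sqrt hβ.le, mul_one, mul_comm]
  have habs (p : ℝ) : |√β * (1 / (1 + β * p ^ 2))| = √β * (1 / (1 + β * p ^ 2)) :=
    abs_of_nonneg (by positivity)
  have hinj : Function.Injective fun p => Real.arctan (√β * p) :=
    Real.arctan_injective.comp (mul_right_injective₀ hs.ne')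
  rw [intervalIntegral.integral_of_le (by linarith [Real.pi_pos]), integral_Ioc_eq_integral_Ioo,
    ← image_arctan_const_mul hs.ne',
    integral_image_eq_integral_abs_deriv_smul .univ (fun p _ => (hderiv p).hasDerivWithinAt)
      hinj.injOn]
  simp only [habs, mul_smul, Measure.restrict_univ]
  rw [integral_smul, inv_smul_smul₀ hs.ne', integral_gmeasure hβ.le]

theorem integral_exp_const_mul_mul_I_eq_sinc (c r : ℝ) :
    ∫ t in -r..r, Complex.exp (c * t * Complex.I) = 2 * r * Real.sinc (c * r) := by
  rcases eq_or_ne c 0 with rfl | hc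
  · simp [two_mul]
  · have h := intervalIntegral.integral_comp_mul_left
      (fun t : ℝ => Complex.exp (t * Complex.I)) hc (a := -r) (b := r)
    rw [mul_neg, integral_exp_mul_I_eq_sinc] at h
    have hc' : (c : ℂ) ≠ 0 := Complex.ofReal_ne_zero.2 hc
    simp only [Complex.ofReal_mul] at h
    rw [h, Complex.real_smul]
    push_cast
    field_simp

end Integration

theorem sinc_eq_real_sinc (x : ℝ) : sinc x = Real.sinc (π * x) := by
  simp [sinc, Real.sinc, Real.pi_ne_zero]

theorem conj_psiPos_mul_psiPos (β hb ξ x y : ℝ) :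
    conj (psiPos β hb ξ x) * psiPos β hb ξ y
      = (√β / π : ℝ) * Complex.exp (-(Complex.I / hb) * ξ *
          ((Real.arctan (√β * y) - Real.arctan (√β * x)) / √β)) := by
  have hnorm : ((√(√β / π) : ℝ) : ℂ) * (√(√β / π) : ℝ) = (√β / π : ℝ) := by
    rw [← Complex.ofReal_mul, Real.mul_self_sqrt (by positivity)]
  rw [psiPos, psiPos, map_mul, ← Complex.exp_conj, Complex.conj_ofReal, mul_mul_mul_comm, hnorm,
    ← Complex.exp_add]
  simp only [map_mul, map_neg, map_div₀, Complex.conj_I, Complex.conj_ofReal]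
  congr 2
  ring

theorem conj_psiPos_ominus_mul_psiPos_oplus {β l p : ℝ} (hβ : 0 < β) (hb ξ : ℝ)
    (hp₀ : |Real.arctan (√β * p)| ≤ l * (π / 2))
    (hp₁ : |Real.arctan (√β * p)| ≤ (1 - l) * (π / 2)) (p' : ℝ) :
    conj (psiPos β hb ξ (ominus β p (circ β (1 - l) p')))
        * psiPos β hb ξ (oplus β p (circ β l p'))
      = (√β / π : ℝ) * Complex.exp (-(Complex.I / hb) * ξ * (Real.arctan (√β * p') / √β)) := by
  have hl₀ : 0 ≤ l := nonneg_of_mul_nonneg_left ((abs_nonneg _).trans hp₀) Real.pi_div_two_pos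
  have hl₁ : 0 ≤ 1 - l := nonneg_of_mul_nonneg_left ((abs_nonneg _).trans hp₁) Real.pi_div_two_pos
  have hplus : Real.arctan (√β * oplus β p (circ β l p'))
      = Real.arctan (√β * p) + l * Real.arctan (√β * p') :=
    arctan_sqrt_mul_oplus_circ hβ (by rwa [abs_of_nonneg hl₀]) p'
  have hminus : Real.arctan (√β * ominus β p (circ β (1 - l) p'))
      = Real.arctan (√β * p) + -(1 - l) * Real.arctan (√β * p') := by
    rw [ominus, ← circ_neg]
    exact arctan_sqrt_mul_oplus_circ hβ
      (by rwa [abs_neg, abs_of_nonneg hl₁, sub_sub_cancel]) p'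
  rw [conj_psiPos_mul_psiPos, hplus, hminus]
  congr 3
  push_cast
  ring

theorem wigner_position_eigenvector_general {β hb l p : ℝ} (hβ : 0 < β) (hhb : hb ≠ 0)
    (hp₀ : |Real.arctan (√β * p)| ≤ l * (π / 2))
    (hp₁ : |Real.arctan (√β * p)| ≤ (1 - l) * (π / 2)) (ξ q : ℝ) :
    Wig β hb l (psiPos β hb ξ) (psiPos β hb ξ) q p
      = (sinc ((q - ξ) / (2 * hb * √β)) : ℝ) := by
  have hs : (√β : ℂ) ≠ 0 := Complex.ofReal_ne_zero.2 (Real.sqrt_pos.2 hβ).ne'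
  have hh : (hb : ℂ) ≠ 0 := Complex.ofReal_ne_zero.2 hhb
  set c : ℝ := (q - ξ) / (hb * √β) with hc
  have hphase (θ : ℝ) : Complex.exp (-(Complex.I / hb) * ξ * (θ / √β))
      * Complex.exp (Complex.I / hb * q * (θ / √β)) = Complex.exp (c * θ * Complex.I) := by
    rw [← Complex.exp_add, hc]
    congr 1
    push_cast
    field_simp
    ring
  calc Wig β hb l (psiPos β hb ξ) (psiPos β hb ξ) q p
      = ∫ p', (√β / π : ℝ) * Complex.exp (c * Real.arctan (√β * p') * Complex.I) ∂gmeasure β := by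
        simp only [Wig, conj_psiPos_ominus_mul_psiPos_oplus hβ hb ξ hp₀ hp₁,
          mul_assoc _ (Complex.exp _), hphase]
    _ = (√β / π : ℝ) *
          ((√β)⁻¹ • ∫ θ in (-(π / 2))..(π / 2), Complex.exp (c * θ * Complex.I)) := by
        rw [integral_const_mul, ← integral_comp_arctan_gmeasure hβ]
    _ = Real.sinc (c * (π / 2)) := by
        rw [integral_exp_const_mul_mul_I_eq_sinc, Complex.real_smul]
        push_cast
        field_simp
    _ = (sinc ((q - ξ) / (2 * hb * √β)) : ℝ) := by
        rw [sinc_eq_real_sinc, hc]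
        ring_nf

theorem wigner_position_eigenvector (β hb ξ : ℝ) (hβ : 0 < β) (hhb : 0 < hb)
    (q p : ℝ) (hp : β * p ^ 2 ≤ 1) :
    Wig β hb (1 / 2) (psiPos β hb ξ) (psiPos β hb ξ) q p
      = ((sinc ((q - ξ) / (2 * hb * Real.sqrt β)) : ℝ) : ℂ) := by
  have hp' := (abs_arctan_sqrt_mul_le_pi_div_four_iff hβ.le).2 hp
  exact wigner_position_eigenvector_general hβ hhb.ne' (by linarith) (by linarith) ξ q
end
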